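/- Let K be a number field, v a finite place of K, and m ≥ 5. If a₁, …, a_m are nonzero elements of the completion K_v, then the quadratic form a₁x₁² + ⋯ + a_mx_m² has a nontrivial zero over K_v. -/

import Mathlib

open IsDedekindDomain NumberField

/-!
The argument is Springer's. If `Q` is anisotropic over the fraction field of a Henselian discrete
valuation ring with uniformizer `π`, then `ν (polar Q x y) ^ 2 ≤ ν (Q x) * ν (Q y)`, since
otherwise Hensel's lemma yields a zero of `Q` in the span of `x` and `y`. Hence the vectors with
`Q x` integral and those with `Q x` in the maximal ideal form submodules `L ⊇ L'`, and `Q` induces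
an anisotropic form on `L / L'` over the residue field; likewise `π⁻¹ Q` does on `L' / π L`. When
the residue field is finite, both quotients have dimension at most `2` by Chevalley–Warning. As `L`
lies in the dual of a lattice for the polar form, it is finitely generated, hence by Nakayama's
lemma generated by at most `4` vectors.
-/

open IsLocalRing Module QuadraticMap

theorem not_anisotropic_of_two_lt_card {k ι : Type*} [Field k] [Finite k] [Fintype ι]
    (hι : 2 < Fintype.card ι) (q : QuadraticForm k (ι → k)) : ¬ q.Anisotropic := by
  classical
  intro hq
  have := Fintype.ofFinite k
  obtain ⟨p, hp⟩ := CharP.exists k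
  let B := (LinearMap.BilinMap.toQuadraticMap_surjective q).choose
  have hB : B.toQuadraticMap = q := (LinearMap.BilinMap.toQuadraticMap_surjective q).choose_spec
  let f : MvPolynomial ι k := ∑ j, ∑ i, .C (B (Pi.single i 1) (Pi.single j 1)) * (.X j * .X i)
  have hf : f.IsHomogeneous 2 := .sum _ _ _ fun j _ => .sum _ _ _ fun i _ =>
    ((MvPolynomial.isHomogeneous_X k j).mul (MvPolynomial.isHomogeneous_X k i)).C_mul _
  have heval (x : ι → k) : MvPolynomial.eval x f = q x := by
    rw [← hB, LinearMap.BilinMap.toQuadraticMap_apply]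
    conv_rhs => rw [pi_eq_sum_univ' x]
    simp [f, map_sum, LinearMap.sum_apply, Finset.mul_sum, mul_comm, mul_assoc]
  have hcard : Fintype.card {x : ι → k // MvPolynomial.eval x f = 0} = 1 :=
    Fintype.card_eq_one_iff.mpr ⟨⟨0, by rw [heval, map_zero]⟩,
      fun x => Subtype.ext (hq _ ((heval x).symm.trans x.2))⟩
  have hdvd := char_dvd_card_solutions p (f := f) (hf.totalDegree_le.trans_lt hι)
  exact CharP.char_ne_one k p (Nat.dvd_one.mp (hcard ▸ hdvd))

theorem rank_le_of_anisotropic {k E : Type*} [Field k] [AddCommGroup E] [Module k E] {n : ℕ}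
    (hk : ∀ q : QuadraticForm k (Fin (n + 1) → k), ¬ q.Anisotropic)
    {q : QuadraticForm k E} (hq : q.Anisotropic) : Module.rank k E ≤ n := by
  by_contra! hlt
  obtain ⟨f, hf⟩ := le_rank_iff_exists_linearMap.mp
    ((Nat.cast_succ n).trans_le (Cardinal.add_one_le_of_lt hlt))
  refine hk (q.comp f) fun x hx => hf ?_
  rw [map_zero]
  exact hq _ hx

theorem smul_anisotropic {F V : Type*} [Field F] [AddCommGroup V] [Module F V]
    {Q : QuadraticForm F V} {c : F} (hc : c ≠ 0) (hQ : Q.Anisotropic) : (c • Q).Anisotropic :=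
  fun x hx => hQ x ((mul_eq_zero.mp hx).resolve_left hc)

theorem polarBilin_nondegenerate_of_anisotropic {F V : Type*} [Field F] [AddCommGroup V]
    [Module F V] {Q : QuadraticForm F V} (h2 : (2 : F) ≠ 0) (hQ : Q.Anisotropic) :
    Q.polarBilin.Nondegenerate := by
  have : Invertible (2 : F) := invertibleOfNonzero h2
  exact nondegenerate_polar_iff.mpr <| nondegenerate_iff_radical_eq_bot.mpr <|
    (Submodule.eq_bot_iff _).mpr fun x hx => hQ x (mem_radical_iff'.mp hx).1

theorem exists_finset_span_eq_top_of_rank_le {k E : Type*} [Field k] [AddCommGroup E] [Module k E]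
    {n : ℕ} (hE : Module.rank k E ≤ n) :
    ∃ s : Finset E, s.card ≤ n ∧ Submodule.span k (s : Set E) = ⊤ := by
  have : Module.Finite k E := rank_lt_aleph0_iff.mp (hE.trans_lt (Cardinal.natCast_lt_aleph0))
  obtain ⟨s, hcard, hs⟩ :=
    (Module.Finite.fg_top (R := k) (M := E)).exists_span_finset_card_eq_spanFinrank
  refine ⟨s, ?_, hs⟩
  rw [hcard, ← finrank_eq_spanFinrank_of_free]
  exact finrank_le_of_rank_le hE

theorem exists_finset_le_span_sup {R M : Type*} [Ring R] [AddCommGroup M] [Module R M]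
    {P N : Submodule R M} {t : Finset (P ⧸ N.submoduleOf P)}
    (ht : Submodule.span R (t : Set (P ⧸ N.submoduleOf P)) = ⊤) :
    ∃ s : Finset M, s.card ≤ t.card ∧ P ≤ Submodule.span R s ⊔ N := by
  classical
  refine ⟨t.image fun e => (e.out : M), Finset.card_image_le, fun x hx => ?_⟩
  have hx' : (N.submoduleOf P).mkQ ⟨x, hx⟩ ∈
      (Submodule.span R (Quotient.out '' (t : Set (P ⧸ N.submoduleOf P)))).map
        (N.submoduleOf P).mkQ := by
    have hout : (N.submoduleOf P).mkQ ∘ Quotient.out = id := funext Quotient.out_eq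
    rw [Submodule.map_span, ← Set.image_comp, hout, Set.image_id, ht]
    trivial
  obtain ⟨y, hy, hyx⟩ := hx'
  have hsub : x - y ∈ N := (Submodule.Quotient.eq (N.submoduleOf P)).mp hyx.symm
  have hyM := Submodule.mem_map_of_mem (f := P.subtype) hy
  rw [Submodule.map_span, ← Set.image_comp] at hyM
  rw [← add_sub_cancel (y : M) x, Finset.coe_image]
  exact Submodule.add_mem_sup hyM hsub

section Hensel

open Polynomial

theorem exists_isUnit_sq_sub_self_add_eq_zero {O : Type*} [CommRing O] [HenselianLocalRing O]
    {t : O} (ht : t ∈ maximalIdeal O) : ∃ w : O, IsUnit w ∧ w ^ 2 - w + t = 0 := by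
  let f : O[X] := X ^ 2 + (-X + C t)
  have hf : f.Monic := monic_X_pow_add (by compute_degree!)
  obtain ⟨w, hw, hw1⟩ := HenselianLocalRing.is_henselian f hf 1 (by simpa [f] using ht)
    (by norm_num [f])
  refine ⟨w, not_not.mp fun hnu => ?_, by simpa [f, ← add_assoc, ← sub_eq_add_neg] using hw⟩
  have h1 : (1 : O) ∈ maximalIdeal O := by
    simpa using sub_mem ((mem_maximalIdeal w).mpr hnu) hw1
  exact (mem_maximalIdeal 1).mp h1 isUnit_one

end Hensel

theorem valuation_algebraMap_lt_one_iff {O F Γ₀ : Type*} [CommRing O] [IsLocalRing O] [Field F]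
    [Algebra O F] [LinearOrderedCommGroupWithZero Γ₀] {ν : Valuation F Γ₀} (hν : ν.Integers O)
    {r : O} : ν (algebraMap O F r) < 1 ↔ r ∈ maximalIdeal O := by
  rw [mem_maximalIdeal, mem_nonunits_iff, hν.isUnit_iff_valuation_eq_one]
  exact (hν.map_le_one r).lt_iff_ne

namespace AnisotropicForm

section HenselianIntegers

variable {O F Γ₀ V : Type*} [CommRing O] [Field F] [Algebra O F]
  [LinearOrderedCommGroupWithZero Γ₀] {ν : Valuation F Γ₀}
  [AddCommGroup V] [Module F V] {Q : QuadraticForm F V}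

theorem valuation_polar_sq_le [HenselianLocalRing O] (hν : ν.Integers O) (hQ : Q.Anisotropic)
    (x y : V) : ν (polar Q x y) ^ 2 ≤ ν (Q x) * ν (Q y) := by
  by_contra! hlt
  set b := polar Q x y with hb
  have hb0 : b ≠ 0 := by
    intro hb0
    simp [hb0] at hlt
  have ht : ν (Q x * Q y / b ^ 2) < 1 := by
    rw [map_div₀, map_mul, map_pow]
    exact (div_lt_one₀ (pow_pos (ν.pos_iff.mpr hb0) 2)).mpr hlt
  obtain ⟨t, ht'⟩ := hν.exists_of_le_one ht.le
  rw [← ht', valuation_algebraMap_lt_one_iff hν] at ht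
  obtain ⟨w, hw, hroot⟩ := exists_isUnit_sq_sub_self_add_eq_zero ht
  have hrootF := congrArg (algebraMap O F) hroot
  simp only [map_add, map_sub, map_pow, map_zero, ht'] at hrootF
  have hz : algebraMap O F w • y - (Q y / b) • x = 0 := by
    refine hQ _ ?_
    rw [sub_eq_add_neg, ← neg_smul, QuadraticMap.map_add Q, QuadraticMap.map_smul,
      QuadraticMap.map_smul, polar_smul_left, polar_smul_right, polar_comm, ← hb]
    simp only [smul_eq_mul]
    field_simp at hrootF ⊢
    linear_combination Q y * hrootF
  have hwt : algebraMap O F w = algebraMap O F (2 * t) := by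
    have hpolar := congrArg (polar Q x) hz
    rw [polar_sub_right, polar_smul_right, polar_smul_right, polar_self, polar_zero_right, ← hb]
      at hpolar
    simp only [smul_eq_mul, nsmul_eq_mul, Nat.cast_ofNat] at hpolar
    rw [map_mul, map_ofNat, ht']
    field_simp at hpolar ⊢
    linear_combination hpolar
  rw [hν.hom_inj hwt] at hw
  exact (mem_maximalIdeal _).mp (Ideal.mul_mem_left _ 2 ht) hw

theorem valuation_polar_le [HenselianLocalRing O] (hν : ν.Integers O) (hQ : Q.Anisotropic)
    (x y : V) : ν (polar Q x y) ≤ max (ν (Q x)) (ν (Q y)) := by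
  rw [← pow_le_pow_iff_left₀ zero_le zero_le two_ne_zero, pow_two (max _ _)]
  exact (valuation_polar_sq_le hν hQ x y).trans
    (mul_le_mul' (le_max_left _ _) (le_max_right _ _))

theorem valuation_map_add_le [HenselianLocalRing O] (hν : ν.Integers O) (hQ : Q.Anisotropic)
    (x y : V) : ν (Q (x + y)) ≤ max (ν (Q x)) (ν (Q y)) := by
  rw [QuadraticMap.map_add Q]
  exact ν.map_add_le (ν.map_add _ _) (valuation_polar_le hν hQ x y)

variable [Module O V] [IsScalarTower O F V]

theorem valuation_map_smul (ν : Valuation F Γ₀) (Q : QuadraticForm F V) (r : O) (x : V) :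
    ν (Q (r • x)) = ν (algebraMap O F r) ^ 2 * ν (Q x) := by
  rw [← algebraMap_smul F r x, QuadraticMap.map_smul, smul_eq_mul, map_mul, map_mul, ← pow_two]

theorem valuation_map_smul_le (hν : ν.Integers O) (Q : QuadraticForm F V) (r : O) (x : V) :
    ν (Q (r • x)) ≤ ν (Q x) := by
  rw [valuation_map_smul]
  exact mul_le_of_le_one_left' (pow_le_one' (hν.map_le_one r) 2)

variable [HenselianLocalRing O]

/-- The lattice of vectors at which an anisotropic form takes integral values: the closed unit
ball for the ultrametric norm `x ↦ ν (Q x)`. -/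
def unitBall (hν : ν.Integers O) (hQ : Q.Anisotropic) : Submodule O V where
  carrier := {x | ν (Q x) ≤ 1}
  zero_mem' := by simp
  add_mem' hx hy := (valuation_map_add_le hν hQ _ _).trans (max_le hx hy)
  smul_mem' r x hx := (valuation_map_smul_le hν Q r x).trans hx

/-- The vectors at which an anisotropic form takes values in the maximal ideal: the open unit ball
for the ultrametric norm `x ↦ ν (Q x)`. -/
def openUnitBall (hν : ν.Integers O) (hQ : Q.Anisotropic) : Submodule O V where
  carrier := {x | ν (Q x) < 1}
  zero_mem' := by simp
  add_mem' hx hy := (valuation_map_add_le hν hQ _ _).trans_lt (max_lt hx hy)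
  smul_mem' r x hx := (valuation_map_smul_le hν Q r x).trans_lt hx

variable {hν : ν.Integers O} {hQ : Q.Anisotropic}

theorem mem_unitBall {x : V} : x ∈ unitBall hν hQ ↔ ν (Q x) ≤ 1 := Iff.rfl

theorem mem_openUnitBall {x : V} : x ∈ openUnitBall hν hQ ↔ ν (Q x) < 1 := Iff.rfl

theorem smul_mem_openUnitBall {r : O} (hr : r ∈ maximalIdeal O) {x : V}
    (hx : x ∈ unitBall hν hQ) : r • x ∈ openUnitBall hν hQ := by
  rw [mem_openUnitBall, valuation_map_smul]
  exact mul_lt_one_of_lt_of_le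
    (pow_lt_one' ((valuation_algebraMap_lt_one_iff hν).mpr hr) two_ne_zero) hx

variable (hν hQ)

theorem exists_integralForm :
    ∃ q : QuadraticForm O (unitBall hν hQ), ∀ x, algebraMap O F (q x) = Q x := by
  choose q hq using fun x : unitBall hν hQ => hν.exists_of_le_one x.2
  have hpolar (x y) : algebraMap O F (polar q x y) = polar Q (x : V) y := by
    simp only [polar, map_sub, hq, Submodule.coe_add]
  refine ⟨ofPolar q (fun r x => hν.hom_inj ?_) (fun x x' y => hν.hom_inj ?_)
    (fun r x y => hν.hom_inj ?_), hq⟩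
  · rw [hq, Submodule.coe_smul, ← algebraMap_smul F, QuadraticMap.map_smul, smul_eq_mul,
      smul_eq_mul, map_mul, map_mul, hq]
  · rw [map_add, hpolar, hpolar, hpolar, Submodule.coe_add, polar_add_left]
  · rw [smul_eq_mul, map_mul, hpolar, hpolar, Submodule.coe_smul, ← algebraMap_smul F,
      polar_smul_left, smul_eq_mul]

/-- The restriction of an anisotropic form to its unit ball, as a quadratic form over the
valuation ring. -/
noncomputable def integralForm : QuadraticForm O (unitBall hν hQ) :=
  (exists_integralForm hν hQ).choose

theorem algebraMap_integralForm (x : unitBall hν hQ) :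
    algebraMap O F (integralForm hν hQ x) = Q x :=
  (exists_integralForm hν hQ).choose_spec x

theorem integralForm_mem_maximalIdeal_iff {x : unitBall hν hQ} :
    integralForm hν hQ x ∈ maximalIdeal O ↔ (x : V) ∈ openUnitBall hν hQ := by
  rw [← valuation_algebraMap_lt_one_iff hν, algebraMap_integralForm, mem_openUnitBall]

theorem polar_integralForm_mem_maximalIdeal {x : unitBall hν hQ}
    (hx : (x : V) ∈ openUnitBall hν hQ) (y : unitBall hν hQ) :
    polar (integralForm hν hQ) x y ∈ maximalIdeal O := by
  rw [← valuation_algebraMap_lt_one_iff hν, ← pow_lt_one_iff_of_nonneg zero_le two_ne_zero]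
  simp only [polar, map_sub, algebraMap_integralForm, Submodule.coe_add]
  exact (valuation_polar_sq_le hν hQ x y).trans_lt (mul_lt_one_of_lt_of_le hx y.2)

/-- The quotient of the closed by the open unit ball of an anisotropic form, on which the form
induces a form over the residue field. -/
abbrev ResidueSpace : Type _ :=
  unitBall hν hQ ⧸ (openUnitBall hν hQ).submoduleOf (unitBall hν hQ)

theorem isTorsionBySet_residueSpace :
    IsTorsionBySet O (ResidueSpace hν hQ) (maximalIdeal O) :=
  (isTorsionBySet_quotient_iff _ _).mpr fun x _ hr => smul_mem_openUnitBall hr x.2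

noncomputable instance : Module (ResidueField O) (ResidueSpace hν hQ) :=
  (isTorsionBySet_residueSpace hν hQ).module

instance : IsScalarTower O (ResidueField O) (ResidueSpace hν hQ) :=
  (isTorsionBySet_residueSpace hν hQ).isScalarTower

theorem openUnitBall_submoduleOf_le_radical :
    (openUnitBall hν hQ).submoduleOf (unitBall hν hQ) ≤
      ((Algebra.linearMap O (ResidueField O)).compQuadraticMap (integralForm hν hQ)).radical := by
  intro x hx
  have hres (r : O) (hr : r ∈ maximalIdeal O) : algebraMap O (ResidueField O) r = 0 :=
    (residue_eq_zero_iff r).mpr hr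
  have hQx := hres _ ((integralForm_mem_maximalIdeal_iff hν hQ).mpr hx)
  refine mem_radical_iff'.mpr ⟨hQx, fun y => ?_⟩
  have hpolar := hres _ (polar_integralForm_mem_maximalIdeal hν hQ hx y)
  simp only [LinearMap.compQuadraticMap_apply, Algebra.linearMap_apply,
    QuadraticMap.map_add (integralForm hν hQ), map_add, hQx, hpolar, zero_add, add_zero]

/-- The anisotropic form over the residue field induced by an anisotropic form on its residue
space. -/
noncomputable def residueForm : QuadraticForm (ResidueField O) (ResidueSpace hν hQ) :=
  let q := ((Algebra.linearMap O (ResidueField O)).compQuadraticMap (integralForm hν hQ)).lift _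
    (openUnitBall_submoduleOf_le_radical hν hQ)
  ofPolar q
    (fun c x => by
      obtain ⟨r, rfl⟩ := residue_surjective c
      exact (congrArg q (algebraMap_smul _ r x)).trans
        ((QuadraticMap.map_smul q r x).trans (by rw [Algebra.smul_def, map_mul]; rfl)))
    (fun x x' y => polar_add_left q x x' y)
    (fun c x y => by
      obtain ⟨r, rfl⟩ := residue_surjective c
      exact (congrArg (polar q · y) (algebraMap_smul _ r x)).trans
        ((polar_smul_left q r x y).trans (algebraMap_smul _ r _).symm))

theorem residueForm_mk (x : unitBall hν hQ) :
    residueForm hν hQ (Submodule.Quotient.mk x) = residue O (integralForm hν hQ x) :=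
  rfl

theorem residueForm_anisotropic : (residueForm hν hQ).Anisotropic := by
  intro e he
  obtain ⟨x, rfl⟩ := Submodule.Quotient.mk_surjective _ e
  rw [residueForm_mk, residue_eq_zero_iff, integralForm_mem_maximalIdeal_iff] at he
  exact (Submodule.Quotient.mk_eq_zero _).mpr he

theorem exists_finset_unitBall_le_span_sup_openUnitBall {n : ℕ}
    (hk : ∀ q : QuadraticForm (ResidueField O) (Fin (n + 1) → ResidueField O), ¬ q.Anisotropic) :
    ∃ s : Finset V, s.card ≤ n ∧
      unitBall hν hQ ≤ Submodule.span O s ⊔ openUnitBall hν hQ := by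
  obtain ⟨t, htn, ht⟩ := exists_finset_span_eq_top_of_rank_le
    (rank_le_of_anisotropic hk (residueForm_anisotropic hν hQ))
  have htO := congrArg (Submodule.restrictScalars O) ht
  rw [Submodule.restrictScalars_span O _ residue_surjective, Submodule.restrictScalars_top] at htO
  obtain ⟨s, hst, hs⟩ := exists_finset_le_span_sup htO
  exact ⟨s, hst.trans htn, hs⟩

theorem exists_smul_mem_unitBall (x : V) :
    ∃ r : O, algebraMap O F r ≠ 0 ∧ r • x ∈ unitBall hν hQ := by
  rcases le_total (ν (Q x)) 1 with hx | hx
  · exact ⟨1, by simp, by rwa [one_smul]⟩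
  · have hx0 : Q x ≠ 0 := ν.ne_zero_iff.mp (zero_lt_one.trans_le hx).ne'
    have hinv : ν (Q x)⁻¹ ≤ 1 := by rw [map_inv₀]; exact inv_le_one_of_one_le₀ hx
    obtain ⟨r, hr⟩ := hν.exists_of_le_one hinv
    refine ⟨r, hr ▸ inv_ne_zero hx0, ?_⟩
    rwa [mem_unitBall, valuation_map_smul, hr, pow_two, mul_assoc, ← map_mul,
      inv_mul_cancel₀ hx0, map_one, mul_one]

theorem exists_basis_mem_unitBall [FiniteDimensional F V] :
    ∃ b : Basis (Fin (finrank F V)) F V, ∀ i, b i ∈ unitBall hν hQ := by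
  let b := finBasis F V
  choose r hr hrb using fun i => exists_smul_mem_unitBall hν hQ (b i)
  refine ⟨b.isUnitSMul fun i => (hr i).isUnit, fun i => ?_⟩
  rw [Basis.isUnitSMul_apply, algebraMap_smul]
  exact hrb i

theorem unitBall_le_dualSubmodule {N : Submodule O V} (hN : N ≤ unitBall hν hQ) :
    unitBall hν hQ ≤ LinearMap.BilinForm.dualSubmodule Q.polarBilin N :=
  fun x hx y hy => Submodule.mem_one.mpr <| hν.exists_of_le_one <|
    (valuation_polar_le hν hQ x y).trans (max_le hx (hN hy))

theorem unitBall_fg [IsNoetherianRing O] [FiniteDimensional F V]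
    (hnd : Q.polarBilin.Nondegenerate) : (unitBall hν hQ).FG := by
  classical
  obtain ⟨b, hb⟩ := exists_basis_mem_unitBall hν hQ
  have hle := unitBall_le_dualSubmodule hν hQ
    (Submodule.span_le.mpr (Set.range_subset_iff.mpr hb))
  rw [LinearMap.BilinForm.dualSubmodule_span_of_basis _ hnd] at hle
  have := Module.Finite.span_of_finite O (Set.finite_range
    (LinearMap.BilinForm.dualBasis Q.polarBilin hnd b))
  have := isNoetherian_of_le hle
  exact Module.Finite.iff_fg.mp inferInstance

theorem span_eq_top_of_unitBall_le_span {s : Set V} (hs : unitBall hν hQ ≤ Submodule.span O s) :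
    Submodule.span F s = ⊤ := by
  refine eq_top_iff.mpr fun x _ => ?_
  obtain ⟨r, hr, hrx⟩ := exists_smul_mem_unitBall hν hQ x
  have hmem := Submodule.span_le_restrictScalars O F s (hs hrx)
  rwa [Submodule.restrictScalars_mem, ← algebraMap_smul F r x,
    Submodule.smul_mem_iff _ hr] at hmem

end HenselianIntegers

theorem valuation_inv_mul_le_one {O F Γ₀ : Type*} [CommRing O] [IsDomain O]
    [IsDiscreteValuationRing O] [Field F] [Algebra O F] [LinearOrderedCommGroupWithZero Γ₀]
    {ν : Valuation F Γ₀} (hν : ν.Integers O) {ϖ : O} (hϖ : Irreducible ϖ) {a : F} (ha : ν a < 1) :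
    ν ((algebraMap O F ϖ)⁻¹ * a) ≤ 1 := by
  obtain ⟨r, rfl⟩ := hν.exists_of_le_one ha.le
  rw [valuation_algebraMap_lt_one_iff hν, hϖ.maximalIdeal_eq, Ideal.mem_span_singleton] at ha
  obtain ⟨d, rfl⟩ := ha
  have hπ : algebraMap O F ϖ ≠ 0 := (map_ne_zero_iff _ hν.hom_inj).mpr hϖ.ne_zero
  rw [map_mul (algebraMap O F), inv_mul_cancel_left₀ hπ]
  exact hν.map_le_one d

section HenselianDiscreteValuationRing

variable {O F Γ₀ V : Type*} [CommRing O] [IsDomain O] [IsDiscreteValuationRing O]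
  [HenselianLocalRing O] [Field F] [Algebra O F] [LinearOrderedCommGroupWithZero Γ₀]
  {ν : Valuation F Γ₀} [AddCommGroup V] [Module F V] {Q : QuadraticForm F V} [Module O V]
  [IsScalarTower O F V] (hν : ν.Integers O) (hQ : Q.Anisotropic)

theorem openUnitBall_le_unitBall_inv_smul {ϖ : O} (hϖ : Irreducible ϖ)
    (hQ' : ((algebraMap O F ϖ)⁻¹ • Q).Anisotropic) :
    openUnitBall hν hQ ≤ unitBall hν hQ' :=
  fun _ hx => valuation_inv_mul_le_one hν hϖ hx

theorem openUnitBall_inv_smul_le {ϖ : O} (hϖ : Irreducible ϖ)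
    (hQ' : ((algebraMap O F ϖ)⁻¹ • Q).Anisotropic) :
    openUnitBall hν hQ' ≤ maximalIdeal O • unitBall hν hQ := by
  intro x hx
  have hπ : algebraMap O F ϖ ≠ 0 := (map_ne_zero_iff _ hν.hom_inj).mpr hϖ.ne_zero
  have hmem : (algebraMap O F ϖ)⁻¹ • x ∈ unitBall hν hQ := by
    rw [mem_unitBall, QuadraticMap.map_smul, smul_eq_mul, mul_assoc]
    exact valuation_inv_mul_le_one hν hϖ hx
  rw [← smul_inv_smul₀ hπ x, algebraMap_smul]
  exact Submodule.smul_mem_smul ((mem_maximalIdeal ϖ).mpr hϖ.not_isUnit) hmem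

theorem exists_finset_unitBall_le_span_sup_smul {n : ℕ}
    (hk : ∀ q : QuadraticForm (ResidueField O) (Fin (n + 1) → ResidueField O), ¬ q.Anisotropic) :
    ∃ s : Finset V, s.card ≤ 2 * n ∧
      unitBall hν hQ ≤ Submodule.span O s ⊔ maximalIdeal O • unitBall hν hQ := by
  classical
  obtain ⟨ϖ, hϖ⟩ := IsDiscreteValuationRing.exists_irreducible O
  have hπ : algebraMap O F ϖ ≠ 0 := (map_ne_zero_iff _ hν.hom_inj).mpr hϖ.ne_zero
  have hQ' := smul_anisotropic (inv_ne_zero hπ) hQ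
  obtain ⟨s, hsn, hs⟩ := exists_finset_unitBall_le_span_sup_openUnitBall hν hQ hk
  obtain ⟨t, htn, ht⟩ := exists_finset_unitBall_le_span_sup_openUnitBall hν hQ' hk
  refine ⟨s ∪ t, (Finset.card_union_le s t).trans (two_mul n ▸ add_le_add hsn htn), ?_⟩
  rw [Finset.coe_union, Submodule.span_union, sup_assoc]
  calc unitBall hν hQ ≤ Submodule.span O s ⊔ openUnitBall hν hQ := hs
    _ ≤ Submodule.span O s ⊔ unitBall hν hQ' :=
      sup_le_sup_left (openUnitBall_le_unitBall_inv_smul hν hQ hϖ hQ') _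
    _ ≤ Submodule.span O s ⊔ (Submodule.span O t ⊔ openUnitBall hν hQ') := sup_le_sup_left ht _
    _ ≤ Submodule.span O s ⊔ (Submodule.span O t ⊔ maximalIdeal O • unitBall hν hQ) :=
      sup_le_sup_left (sup_le_sup_left (openUnitBall_inv_smul_le hν hQ hϖ hQ') _) _

include hν hQ in
theorem finrank_le_two_mul [FiniteDimensional F V] (hnd : Q.polarBilin.Nondegenerate) {n : ℕ}
    (hk : ∀ q : QuadraticForm (ResidueField O) (Fin (n + 1) → ResidueField O), ¬ q.Anisotropic) :
    finrank F V ≤ 2 * n := by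
  obtain ⟨s, hsn, hs⟩ := exists_finset_unitBall_le_span_sup_smul hν hQ hk
  have hspan := span_eq_top_of_unitBall_le_span hν hQ <|
    Submodule.le_of_le_smul_of_le_jacobson_bot (unitBall_fg hν hQ hnd)
      (maximalIdeal_le_jacobson ⊥) hs
  have hrank := finrank_span_finset_le_card (R := F) s
  rw [Set.finrank, hspan, finrank_top] at hrank
  exact hrank.trans hsn

end HenselianDiscreteValuationRing

end AnisotropicForm

theorem integers_valuation (O F : Type*) [CommRing O] [IsDomain O] [ValuationRing O] [Field F]
    [Algebra O F] [IsFractionRing O F] : (ValuationRing.valuation O F).Integers O where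
  hom_inj := IsFractionRing.injective O F
  map_le_one r := (ValuationRing.mem_integer_iff O F _).mpr ⟨r, rfl⟩
  exists_of_le_one {a} h := (ValuationRing.mem_integer_iff O F a).mp h

open AnisotropicForm in
theorem isotropic_of_five_variables_adicCompletion_general {F V : Type*} (O : Type*)
    [CommRing O] [IsDomain O] [IsDiscreteValuationRing O] [HenselianLocalRing O]
    [Finite (ResidueField O)] [Field F] [Algebra O F] [IsFractionRing O F] (h2 : (2 : F) ≠ 0)
    [AddCommGroup V] [Module F V] (hV : 5 ≤ finrank F V) (Q : QuadraticForm F V) :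
    ∃ x, x ≠ 0 ∧ Q x = 0 := by
  by_contra! hQ
  have hQ : Q.Anisotropic := fun x => not_imp_not.mp (hQ x)
  let := Module.compHom V (algebraMap O F)
  have : IsScalarTower O F V := ⟨fun r c x => by rw [Algebra.smul_def, mul_smul]; rfl⟩
  have : FiniteDimensional F V := finite_of_finrank_pos (by lia)
  have := finrank_le_two_mul (integers_valuation O F) hQ
    (polarBilin_nondegenerate_of_anisotropic h2 hQ)
    (not_anisotropic_of_two_lt_card (ι := Fin (2 + 1)) (by simp))
  lia

theorem henselianLocalRing_of_isAdicComplete (R : Type*) [CommRing R] [IsLocalRing R]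
    [IsAdicComplete (maximalIdeal R) R] : HenselianLocalRing R where
  is_henselian f hf a₀ h0 h' :=
    HenselianRing.is_henselian f hf a₀ h0 (h'.map (Ideal.Quotient.mk (maximalIdeal R)))

theorem exists_maximalIdeal_pow_lt {O F Γ₀ : Type*} [CommRing O] [IsNoetherianRing O]
    [IsLocalRing O] [Field F] [Algebra O F] [LinearOrderedCommGroupWithZero Γ₀]
    {ν : Valuation F Γ₀} (hν : ν.Integers O) {a : F} (ha : a ≠ 0) :
    ∃ n, ∀ x ∈ maximalIdeal O ^ n, ν (algebraMap O F x) < ν a := by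
  by_contra! hcon
  obtain ⟨y, -, hy⟩ := hcon 0
  obtain ⟨r, rfl⟩ := hν.exists_of_le_one (hy.trans (hν.map_le_one y))
  have hr : r ∈ ⨅ n, maximalIdeal O ^ n := (Submodule.mem_iInf _).mpr fun n =>
    have ⟨_, hx, hrx⟩ := hcon n
    Ideal.mem_of_dvd _ (hν.dvd_of_le hrx) hx
  rw [Ideal.iInf_pow_eq_bot_of_isLocalRing _ Ideal.IsPrime.ne_top', Ideal.mem_bot] at hr
  exact ha (by rw [hr, map_zero])

theorem mem_nhds_zero_iff_exists_valuation_lt {F Γ₀ : Type*} [Field F]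
    [LinearOrderedCommGroupWithZero Γ₀] [Valued F Γ₀] {s : Set F} :
    s ∈ nhds 0 ↔ ∃ a : F, a ≠ 0 ∧ {x | Valued.v x < Valued.v a} ⊆ s := by
  rw [Valued.mem_nhds_zero]
  constructor
  · rintro ⟨γ, hγ⟩
    obtain ⟨a, ha⟩ := MonoidWithZeroHom.ValueGroup₀.restrict₀_surjective _ γ.1
    refine ⟨a, fun ha0 => γ.ne_zero (by rw [← ha, ha0, map_zero]), ?_⟩
    simpa only [← ha, ← Valuation.restrict_def, Valuation.restrict_lt_iff] using hγ
  · rintro ⟨a, ha, has⟩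
    refine ⟨Units.mk0 (Valued.v.restrict a) ((map_ne_zero _).mpr ha), ?_⟩
    simpa only [Units.val_mk0, Valuation.restrict_lt_iff] using has

theorem isAdic_maximalIdeal_of_isInducing {O F Γ₀ : Type*} [CommRing O] [IsDomain O]
    [IsDiscreteValuationRing O] [TopologicalSpace O] [IsTopologicalRing O] [Field F] [Algebra O F]
    [LinearOrderedCommGroupWithZero Γ₀] [Valued F Γ₀]
    (hO : (Valued.v : Valuation F Γ₀).Integers O) (hind : Topology.IsInducing (algebraMap O F)) :
    IsAdic (maximalIdeal O) := by
  obtain ⟨ϖ, hϖ⟩ := IsDiscreteValuationRing.exists_irreducible O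
  have hnhds : nhds (0 : O) = (nhds 0).comap (algebraMap O F) := by
    rw [hind.nhds_eq_comap, map_zero]
  rw [isAdic_iff]
  refine ⟨fun n => (maximalIdeal O ^ n).toAddSubgroup.isOpen_of_mem_nhds (g := 0) ?_,
    fun s hs => ?_⟩
  · rw [hnhds]
    refine ⟨_, mem_nhds_zero_iff_exists_valuation_lt.mpr ⟨algebraMap O F (ϖ ^ n),
      (map_ne_zero_iff _ hO.hom_inj).mpr (pow_ne_zero n hϖ.ne_zero), subset_rfl⟩, fun x hx => ?_⟩
    change x ∈ maximalIdeal O ^ n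
    rw [hϖ.maximalIdeal_eq, Ideal.span_singleton_pow, Ideal.mem_span_singleton]
    exact hO.dvd_of_le hx.le
  · rw [hnhds] at hs
    obtain ⟨t, ht, hts⟩ := hs
    obtain ⟨a, ha, hat⟩ := mem_nhds_zero_iff_exists_valuation_lt.mp ht
    obtain ⟨n, hn⟩ := exists_maximalIdeal_pow_lt hO ha
    exact ⟨n, fun x hx => hts (hat (hn x hx))⟩

section Dedekind

variable {R K : Type*} [CommRing R] [IsDedekindDomain R] [Field K] [Algebra R K]
  [IsFractionRing R K] (v : HeightOneSpectrum R)

instance henselianLocalRing_adicCompletionIntegers :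
    HenselianLocalRing (v.adicCompletionIntegers K) := by
  have : IsTopologicalRing (v.adicCompletionIntegers K) :=
    inferInstanceAs (IsTopologicalRing (v.adicCompletionIntegers K).toSubring)
  have : IsUniformAddGroup (v.adicCompletionIntegers K) :=
    inferInstanceAs (IsUniformAddGroup (v.adicCompletionIntegers K).toSubring.toAddSubgroup)
  have : CompleteSpace (v.adicCompletionIntegers K) :=
    (Valued.isClosed_valuationSubring (v.adicCompletion K)).isComplete.completeSpace_coe
  have : IsAdicComplete (maximalIdeal (v.adicCompletionIntegers K)) (v.adicCompletionIntegers K) :=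
    (isAdic_maximalIdeal_of_isInducing (HeightOneSpectrum.adicCompletionIntegers.integers K v)
      .subtypeVal).isAdicComplete_iff.mpr ⟨this, inferInstance⟩
  exact henselianLocalRing_of_isAdicComplete _

theorem exists_algebraMap_sub_mem_maximalIdeal (x : v.adicCompletionIntegers K) :
    ∃ r : R, algebraMap R (v.adicCompletionIntegers K) r - x ∈ maximalIdeal _ := by
  have hopen : IsOpen {y : v.adicCompletion K | Valued.v (y - x) < 1} := by
    simpa only [Set.preimage_ofPred_eq, Valuation.restrict_lt_one_iff] using
      (Valued.isOpen_ball (v.adicCompletion K) 1).preimage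
        (continuous_sub_right (x : v.adicCompletion K))
  obtain ⟨z, hz : Valued.v (algebraMap K _ z - x.1) < 1⟩ :=
    (HeightOneSpectrum.denseRange_algebraMap K v).exists_mem_open hopen ⟨x, by simp⟩
  have hz1 : v.valuation K z ≤ 1 := by
    rw [← HeightOneSpectrum.valuedAdicCompletion_eq_valuation',
      ← sub_add_cancel (z : v.adicCompletion K) x]
    exact (Valued.v.map_add _ _).trans (max_le hz.le x.2)
  obtain ⟨r, hr⟩ := v.exists_valuation_sub_lt_of_integer hz1 1
  have heq : ((algebraMap R (v.adicCompletionIntegers K) r - x : v.adicCompletionIntegers K) :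
      v.adicCompletion K) = algebraMap K _ (algebraMap R K r - z) + (algebraMap K _ z - x) := by
    rw [map_sub, sub_add_sub_cancel]
    rfl
  refine ⟨r, (valuation_algebraMap_lt_one_iff
    (HeightOneSpectrum.adicCompletionIntegers.integers K v)).mp ?_⟩
  exact (congrArg Valued.v heq).trans_lt (Valued.v.map_add_lt
    ((HeightOneSpectrum.valuedAdicCompletion_eq_valuation' v _).trans_lt hr) hz)

instance finite_residueField_adicCompletionIntegers [Finite (R ⧸ v.asIdeal)] :
    Finite (ResidueField (v.adicCompletionIntegers K)) := by
  let f := (residue _).comp (algebraMap R (v.adicCompletionIntegers K))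
  have hf : v.asIdeal ≤ RingHom.ker f := fun r hr => by
    rw [RingHom.mem_ker, RingHom.comp_apply, residue_eq_zero_iff,
      ← valuation_algebraMap_lt_one_iff (HeightOneSpectrum.adicCompletionIntegers.integers K v)]
    change Valued.v ((algebraMap R K r : K) : v.adicCompletion K) < 1
    rw [HeightOneSpectrum.valuedAdicCompletion_eq_valuation']
    exact (HeightOneSpectrum.valuation_lt_one_iff_mem v r).mpr hr
  refine Finite.of_surjective (Ideal.Quotient.lift v.asIdeal f hf)
    (Ideal.Quotient.lift_surjective_of_surjective _ _ fun y => ?_)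
  obtain ⟨x, rfl⟩ := residue_surjective y
  obtain ⟨r, hr⟩ := exists_algebraMap_sub_mem_maximalIdeal v x
  exact ⟨r, Ideal.Quotient.eq.mpr hr⟩

end Dedekind

/-- Over the completion of a number field at a finite place, every diagonal quadratic form in
at least five variables with nonzero coefficients has a nontrivial zero. -/
theorem isotropic_of_five_variables_adicCompletion
    (K : Type*) [Field K] [NumberField K] (v : HeightOneSpectrum (𝓞 K))
    (m : ℕ) (hm : 5 ≤ m) (a : Fin m → v.adicCompletion K) (ha : ∀ i, a i ≠ 0) :
    ∃ x : Fin m → v.adicCompletion K, x ≠ 0 ∧ (∑ i, a i * x i ^ 2) = 0 := by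
  have : CharZero (v.adicCompletion K) :=
    charZero_of_injective_algebraMap (algebraMap K (v.adicCompletion K)).injective
  have : Finite (𝓞 K ⧸ v.asIdeal) := v.asIdeal.finiteQuotientOfFreeOfNeBot v.ne_bot
  simpa only [weightedSumSquares_apply, smul_eq_mul, pow_two] using
    isotropic_of_five_variables_adicCompletion_general (v.adicCompletionIntegers K) two_ne_zero
      (by simpa using hm) (weightedSumSquares (v.adicCompletion K) a)
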